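/- Let q be the Fibonacci Quilt sequence. For all n ≥ 7, 2·q(n) = q(n+2) + q(n-5). -/

import Mathlib

/-! From index 2 on, the Quilt sequence satisfies the Padovan recurrence
`q (n + 3) = q (n + 1) + q n`; at index 1 it does not, as `q 4 = 4 ≠ q 2 + q 1`. Since `x³ - x - 1`
divides `x⁵ - x⁴ - 1`, it also satisfies `q (n + 5) = q (n + 4) + q n`. Adding `q (n + 5)` to both
sides turns `q (n + 5) + q (n + 4)` into `q (n + 7)`. -/

/-- The sequence `q` satisfies the recurrence of the Padovan numbers at every index from `N` on,
with arbitrary initial values. -/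
def IsPadovanFrom {M : Type*} [Add M] (q : ℕ → M) (N : ℕ) : Prop :=
  ∀ n ≥ N, q (n + 3) = q (n + 1) + q n

theorem IsPadovanFrom.add_five {M : Type*} [AddCommSemigroup M] {q : ℕ → M} {N n : ℕ}
    (hq : IsPadovanFrom q N) (hn : N ≤ n) : q (n + 5) = q (n + 4) + q n :=
  calc
    q (n + 5) = q (n + 3) + q (n + 2) := hq (n + 2) (by lia)
    _ = q (n + 1) + q n + q (n + 2) := by rw [hq n hn]
    _ = q (n + 2) + q (n + 1) + q n := by rw [add_comm, add_assoc]
    _ = q (n + 4) + q n := by rw [hq (n + 1) (by lia)]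

theorem stmt_2_general {M : Type*} [AddCommMonoid M] {q : ℕ → M} {N : ℕ}
    (hq : IsPadovanFrom q N) : ∀ n ≥ N + 5, 2 • q n = q (n + 2) + q (n - 5) := by
  intro n hn
  obtain ⟨k, rfl⟩ : ∃ k, n = k + 5 := Nat.exists_eq_add_of_le' (by lia)
  have hk : N ≤ k := by lia
  calc
    2 • q (k + 5) = q (k + 5) + q (k + 5) := two_nsmul _
    _ = q (k + 5) + (q (k + 4) + q k) := by rw [← hq.add_five hk]
    _ = q (k + 5) + q (k + 4) + q k := (add_assoc _ _ _).symm
    _ = q (k + 7) + q k := by rw [hq (k + 4) (by lia)]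

theorem isPadovanFrom_two_of_fibonacciQuilt {R : Type*} [AddMonoidWithOne R] {q : ℕ → R}
    (h2 : q 2 = 2) (h3 : q 3 = 3) (h4 : q 4 = 4) (h5 : q 5 = 5) (h6 : q 6 = 7) (h7 : q 7 = 9)
    (hrec : ∀ n ≥ 7, q (n + 1) = q (n - 1) + q (n - 2)) : IsPadovanFrom q 2
  | 2, _ => by norm_num [h2, h3, h5]
  | 3, _ => by norm_num [h3, h4, h6]
  | 4, _ => by norm_num [h4, h5, h7]
  | n + 5, _ => hrec (n + 7) (by lia)

theorem stmt_2 (q : ℕ → ℤ)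
    (h1 : q 1 = 1) (h2 : q 2 = 2) (h3 : q 3 = 3) (h4 : q 4 = 4)
    (h5 : q 5 = 5) (h6 : q 6 = 7) (h7 : q 7 = 9)
    (hrec : ∀ n ≥ 7, q (n + 1) = q (n - 1) + q (n - 2)) :
    ∀ n ≥ 7, 2 * q n = q (n + 2) + q (n - 5) := by
  simpa only [nsmul_eq_mul, Nat.cast_ofNat] using
    stmt_2_general (isPadovanFrom_two_of_fibonacciQuilt h2 h3 h4 h5 h6 h7 hrec)
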